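/- arXiv:2002.01274 — 3 statements merged into one kernel-verified Lean document; each statement's English description precedes it below -/
import Mathlib

section
/- Corrected Hund–von Neumann–Wigner theorem for 2×2 hermitean pencils (crossing implies decomposability): let F and G be hermitean 2×2 complex matrices and suppose that for some real t₀ the matrix F + t₀•G has a repeated eigenvalue (its characteristic polynomial is (X − C(μ))² for some μ ∈ ℂ). Then the flow A(t) = F + t•G is structurally decomposable: there exists one fixed unitary 2×2 matrix U such that Uᴴ * (F + t•G) * U is a diagonal matrix for every real t. -/
open Matrix

/-- A hermitean matrix whose characteristic polynomial is a power of `X - μ` is scalar. -/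
theorem Matrix.IsHermitian.eq_smul_one_of_charpoly_eq_pow {n : Type*} [Fintype n] [DecidableEq n]
    {A : Matrix n n ℂ} (hA : A.IsHermitian) {μ : ℂ} {k : ℕ}
    (h : A.charpoly = (Polynomial.X - Polynomial.C μ) ^ k) : A = μ • 1 := by
  have heig : (RCLike.ofReal ∘ hA.eigenvalues : n → ℂ) = fun _ => μ := by
    funext i
    have hprod := congrArg (Polynomial.eval (hA.eigenvalues i : ℂ)) (hA.charpoly_eq.symm.trans h)
    rw [Polynomial.eval_prod, Finset.prod_eq_zero (Finset.mem_univ i) (by simp)] at hprod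
    simp only [Polynomial.eval_pow, Polynomial.eval_sub, Polynomial.eval_X,
      Polynomial.eval_C] at hprod
    exact sub_eq_zero.mp (eq_zero_of_pow_eq_zero hprod.symm)
  rw [hA.spectral_theorem, heig, ← smul_one_eq_diagonal, map_smul, map_one]

/-- Corrected Hund–von Neumann–Wigner theorem for 2×2 hermitean pencils: if the hermitean
pencil `F + t•G` has a repeated eigenvalue at some `t₀`, then the flow is structurally
decomposable: one fixed unitary `U` diagonalizes `F + t•G` for every real `t`. -/
theorem hermitean_pencil_crossing_implies_decomposable
    (F G : Matrix (Fin 2) (Fin 2) ℂ) (hF : Fᴴ = F) (hG : Gᴴ = G)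
    (t₀ : ℝ) (μ : ℂ)
    (hcross : (F + (t₀ : ℂ) • G).charpoly = (Polynomial.X - Polynomial.C μ) ^ 2) :
    ∃ U : Matrix (Fin 2) (Fin 2) ℂ, Uᴴ * U = 1 ∧
      ∀ t : ℝ, ∀ i j : Fin 2, i ≠ j → (Uᴴ * (F + (t : ℂ) • G) * U) i j = 0 := by
  have hherm : (F + (t₀ : ℂ) • G).IsHermitian := by
    simp [IsHermitian, conjTranspose_add, conjTranspose_smul, hF, hG]
  have hscalar := hherm.eq_smul_one_of_charpoly_eq_pow hcross
  have hG' : G.IsHermitian := hG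
  let U : Matrix (Fin 2) (Fin 2) ℂ := (hG'.eigenvectorUnitary).val
  have hU : Uᴴ * U = 1 := Unitary.coe_star_mul_self hG'.eigenvectorUnitary
  have hdiag : Uᴴ * G * U = diagonal (RCLike.ofReal ∘ hG'.eigenvalues) := by
    rw [← hG'.conjStarAlgAut_star_eigenvectorUnitary, Unitary.conjStarAlgAut_star_apply]
    rfl
  refine ⟨U, hU, fun t i j hij => ?_⟩
  have hpencil : F + (t : ℂ) • G = μ • 1 + ((t : ℂ) - t₀) • G := by
    rw [← hscalar]
    module
  rw [hpencil, mul_add, add_mul, mul_smul_comm, mul_smul_comm, smul_mul_assoc, smul_mul_assoc,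
    mul_one, hU, hdiag]
  simp [hij]
end

section
/- Hund–von Neumann–Wigner no-crossing theorem for indecomposable 2×2 hermitean pencils: let F and G be hermitean 2×2 complex matrices and suppose there exists NO fixed unitary 2×2 matrix U such that Uᴴ * (F + t•G) * U is diagonal for every real t (the flow F + t•G is indecomposable). Then for every real t the characteristic polynomial of F + t•G has two distinct roots; i.e., the two eigenvalue curves of the flow never intersect. -/
open Matrix

/-- A hermitean matrix all of whose eigenvalues equal `c` is the scalar matrix `c • 1`. -/
theorem Matrix.IsHermitian.eq_smul_one_of_eigenvalues_eq {n : Type*} [Fintype n] [DecidableEq n]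
    {A : Matrix n n ℂ} (hA : A.IsHermitian) {c : ℝ} (h : ∀ i, hA.eigenvalues i = c) :
    A = (c : ℂ) • 1 := by
  have hdiag : diagonal (RCLike.ofReal ∘ hA.eigenvalues) = (c : ℂ) • (1 : Matrix n n ℂ) := by
    rw [smul_one_eq_diagonal]
    congr 1
    ext i
    simp [h i]
  conv_lhs => rw [hA.spectral_theorem, hdiag]
  simp

/-- The eigenvector unitary of a hermitean matrix `G` diagonalizes every matrix
`a • 1 + b • G` in its span with the scalar matrices. -/
theorem Matrix.IsHermitian.eigenvectorUnitary_diagonalizes_smul_one_add_smul {n : Type*}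
    [Fintype n] [DecidableEq n] {G : Matrix n n ℂ} (hG : G.IsHermitian) (a b : ℂ) {i j : n}
    (hij : i ≠ j) :
    ((hG.eigenvectorUnitary : Matrix n n ℂ)ᴴ * (a • 1 + b • G) *
      (hG.eigenvectorUnitary : Matrix n n ℂ)) i j = 0 := by
  have hU : (hG.eigenvectorUnitary : Matrix n n ℂ)ᴴ * hG.eigenvectorUnitary = 1 :=
    Unitary.coe_star_mul_self hG.eigenvectorUnitary
  have hD : (hG.eigenvectorUnitary : Matrix n n ℂ)ᴴ * G *
      (hG.eigenvectorUnitary : Matrix n n ℂ) =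
      diagonal (RCLike.ofReal ∘ hG.eigenvalues) := by
    simpa [Unitary.conjStarAlgAut_apply, star_eq_conjTranspose] using
      hG.conjStarAlgAut_star_eigenvectorUnitary
  simp [mul_add, add_mul, hU, hD, hij]

/-- Hund–von Neumann–Wigner no-crossing theorem for indecomposable 2×2 hermitean pencils:
if no fixed unitary `U` diagonalizes `F + t•G` simultaneously for all real `t`, then for
every `t` the characteristic polynomial of `F + t•G` has two distinct roots: the two
eigenvalue curves of the flow never intersect. -/
theorem hermitean_pencil_indecomposable_no_crossing
    (F G : Matrix (Fin 2) (Fin 2) ℂ) (hF : Fᴴ = F) (hG : Gᴴ = G)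
    (hindec : ¬ ∃ U : Matrix (Fin 2) (Fin 2) ℂ, Uᴴ * U = 1 ∧
      ∀ t : ℝ, ∀ i j : Fin 2, i ≠ j → (Uᴴ * (F + (t : ℂ) • G) * U) i j = 0) :
    ∀ t : ℝ, ∃ μ₁ μ₂ : ℂ, μ₁ ≠ μ₂ ∧
      (F + (t : ℂ) • G).charpoly.IsRoot μ₁ ∧ (F + (t : ℂ) • G).charpoly.IsRoot μ₂ := by
  intro t
  have hA : (F + (t : ℂ) • G).IsHermitian := by
    simp [Matrix.IsHermitian, hF, hG]
  have hG' : G.IsHermitian := hG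
  refine ⟨hA.eigenvalues 0, hA.eigenvalues 1, fun heq => hindec ?_, ?_, ?_⟩
  · have hscalar := hA.eq_smul_one_of_eigenvalues_eq (c := hA.eigenvalues 0) (by
      have h10 : hA.eigenvalues 1 = hA.eigenvalues 0 := by exact_mod_cast heq.symm
      simp [Fin.forall_fin_two, h10])
    refine ⟨hG'.eigenvectorUnitary, Unitary.coe_star_mul_self _, fun s i j hij => ?_⟩
    have hpencil : F + (s : ℂ) • G =
        (hA.eigenvalues 0 : ℂ) • 1 + ((s : ℂ) - t) • G := by
      rw [← hscalar]
      module
    rw [hpencil]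
    exact hG'.eigenvectorUnitary_diagonalizes_smul_one_add_smul _ _ hij
  all_goals
    rw [hA.charpoly_eq]
    simp [Polynomial.IsRoot]
end

section
/- Corrected Hund–von Neumann–Wigner theorem for 2×2 real symmetric pencils: let F and G be real symmetric 2×2 matrices and suppose that for some real t₀ the matrix F + t₀•G has a repeated eigenvalue (its characteristic polynomial is (X − C(μ))² for some μ ∈ ℝ). Then the flow is structurally decomposable via an orthogonal similarity: there exists one fixed orthogonal 2×2 real matrix U such that Uᵀ * (F + t•G) * U is a diagonal matrix for every real t. -/
open Matrix

/-- A real symmetric matrix annihilated by `(X - μ) ^ 2` is the scalar matrix `μ`. -/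
theorem Matrix.eq_smul_one_of_transpose_eq_of_sub_sq_eq_zero {n : Type*} [Fintype n]
    [DecidableEq n] {H : Matrix n n ℝ} (hH : Hᵀ = H) {μ : ℝ}
    (h : (H - μ • (1 : Matrix n n ℝ)) ^ 2 = 0) : H = μ • (1 : Matrix n n ℝ) := by
  refine sub_eq_zero.mp (Matrix.conjTranspose_mul_self_eq_zero.mp ?_)
  have hsymm : (H - μ • (1 : Matrix n n ℝ))ᴴ = H - μ • (1 : Matrix n n ℝ) := by
    rw [conjTranspose_eq_transpose_of_trivial, transpose_sub, hH, transpose_smul, transpose_one]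
  rw [hsymm, ← pow_two, h]

/-- A real symmetric matrix is diagonalized by an orthogonal matrix. -/
theorem Matrix.exists_orthogonal_diagonalization {n : Type*} [Fintype n] [DecidableEq n]
    {G : Matrix n n ℝ} (hG : Gᵀ = G) :
    ∃ U : Matrix n n ℝ, Uᵀ * U = 1 ∧ ∃ d : n → ℝ, Uᵀ * G * U = diagonal d := by
  have hherm : G.IsHermitian := by
    rw [Matrix.IsHermitian, conjTranspose_eq_transpose_of_trivial, hG]
  have hU : (hherm.eigenvectorUnitary : Matrix n n ℝ)ᵀ * hherm.eigenvectorUnitary = 1 := by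
    rw [← conjTranspose_eq_transpose_of_trivial, ← star_eq_conjTranspose]
    exact Unitary.coe_star_mul_self hherm.eigenvectorUnitary
  refine ⟨hherm.eigenvectorUnitary, hU, hherm.eigenvalues, ?_⟩
  have hspec := hherm.conjStarAlgAut_star_eigenvectorUnitary
  rw [Unitary.conjStarAlgAut_star_apply, star_eq_conjTranspose,
    conjTranspose_eq_transpose_of_trivial] at hspec
  exact hspec

/-- Corrected Hund–von Neumann–Wigner theorem for 2×2 real symmetric pencils: if the
symmetric pencil `F + t•G` has a repeated eigenvalue at some `t₀`, then the flow is
structurally decomposable via an orthogonal similarity: one fixed orthogonal `U`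
diagonalizes `F + t•G` for every real `t`. -/
theorem symmetric_pencil_crossing_implies_decomposable
    (F G : Matrix (Fin 2) (Fin 2) ℝ) (hF : Fᵀ = F) (hG : Gᵀ = G)
    (t₀ : ℝ) (μ : ℝ)
    (hcross : (F + t₀ • G).charpoly = (Polynomial.X - Polynomial.C μ) ^ 2) :
    ∃ U : Matrix (Fin 2) (Fin 2) ℝ, Uᵀ * U = 1 ∧
      ∀ t : ℝ, ∀ i j : Fin 2, i ≠ j → (Uᵀ * (F + t • G) * U) i j = 0 := by
  have hscalar : F + t₀ • G = μ • (1 : Matrix (Fin 2) (Fin 2) ℝ) := by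
    apply Matrix.eq_smul_one_of_transpose_eq_of_sub_sq_eq_zero
    · rw [transpose_add, transpose_smul, hF, hG]
    · have hCH := Matrix.aeval_self_charpoly (F + t₀ • G)
      rwa [hcross, map_pow, map_sub, Polynomial.aeval_X, Polynomial.aeval_C,
        Algebra.algebraMap_eq_smul_one] at hCH
  obtain ⟨U, hU, d, hd⟩ := Matrix.exists_orthogonal_diagonalization hG
  refine ⟨U, hU, fun t i j hij => ?_⟩
  have hpencil : F + t • G = μ • (1 : Matrix (Fin 2) (Fin 2) ℝ) + (t - t₀) • G := by
    rw [← hscalar, sub_smul]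
    abel
  have hconj : Uᵀ * (F + t • G) * U =
      μ • (1 : Matrix (Fin 2) (Fin 2) ℝ) + (t - t₀) • diagonal d := by
    rw [hpencil, ← hd]
    simp only [Matrix.mul_add, Matrix.add_mul, Matrix.mul_smul, Matrix.smul_mul, hU,
      Matrix.mul_one]
  rw [hconj]
  simp [hij]
end
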